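/- Fix k, α₁, θ ∈ ℝ. For ε > 0 let d0(ε) = Re(Tr(U_YY(k·√ε)))/2, where the walk unitary U_YY is taken with coin angle α = α₁·√ε and twist angle θ. Then lim_{ε→0⁺} (1 − d0(ε))/ε² = 2·k²·(2α₁ − k·sin θ)². -/

import Mathlib

open Matrix Filter Topology

noncomputable def σx : Matrix (Fin 2) (Fin 2) ℂ := !![0, 1; 1, 0]
noncomputable def σy : Matrix (Fin 2) (Fin 2) ℂ := !![0, -Complex.I; Complex.I, 0]
noncomputable def σz : Matrix (Fin 2) (Fin 2) ℂ := !![1, 0; 0, -1]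

/-- Rotation about the x-axis by angle `t`. -/
noncomputable def Rx (t : ℝ) : Matrix (Fin 2) (Fin 2) ℂ :=
  !![(Real.cos (t/2) : ℂ), -Complex.I * Real.sin (t/2);
     -Complex.I * Real.sin (t/2), (Real.cos (t/2) : ℂ)]

/-- Rotation about the y-axis by angle `t`. -/
noncomputable def Ry (t : ℝ) : Matrix (Fin 2) (Fin 2) ℂ :=
  !![(Real.cos (t/2) : ℂ), -(Real.sin (t/2) : ℂ);
     (Real.sin (t/2) : ℂ), (Real.cos (t/2) : ℂ)]

/-- Rotation about the z-axis by angle `t`. -/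
noncomputable def Rz (t : ℝ) : Matrix (Fin 2) (Fin 2) ℂ :=
  !![Complex.exp (-(Complex.I * t) / 2), 0; 0, Complex.exp ((Complex.I * t) / 2)]

/-- Fourier-space shift operator at momentum `κ`. -/
noncomputable def Sh (κ : ℝ) : Matrix (Fin 2) (Fin 2) ℂ :=
  !![Complex.exp (Complex.I * κ), 0; 0, Complex.exp (-(Complex.I * κ))]

/-- The coin operator `Cα`. -/
noncomputable def Calpha (α : ℝ) : Matrix (Fin 2) (Fin 2) ℂ :=
  !![(Real.sin α : ℂ), -Complex.I * Real.cos α;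
     Complex.I * Real.cos α, -(Real.sin α : ℂ)]

/-- The coin operator `Cβ`. -/
noncomputable def Cbeta (α : ℝ) : Matrix (Fin 2) (Fin 2) ℂ :=
  !![-(Real.cos α : ℂ), -Complex.I * Real.sin α;
     -Complex.I * Real.sin α, -(Real.cos α : ℂ)]

/-- The massless homogeneous Y–Y twisted quantum walk unitary at momentum `k`,
coin angle `α` and twist angle `θ`: `U_YY = (W_β · W_α)²` with
`W_α = S(k)·Cα` and `W_β = R_y(−θ)·S(k)·R_y(θ)·Cβ`. -/
noncomputable def UYY (k α θ : ℝ) : Matrix (Fin 2) (Fin 2) ℂ :=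
  (Ry (-θ) * Sh k * Ry θ * Cbeta α * (Sh k * Calpha α)) *
    (Ry (-θ) * Sh k * Ry θ * Cbeta α * (Sh k * Calpha α))

theorem Sh_eq_cos_sin (κ : ℝ) :
    Sh κ = !![(Real.cos κ : ℂ) + Complex.I * Real.sin κ, 0;
      0, (Real.cos κ : ℂ) - Complex.I * Real.sin κ] := by
  have h₁ : Complex.exp (Complex.I * κ) = Real.cos κ + Complex.I * Real.sin κ := by
    rw [mul_comm, Complex.exp_mul_I]; push_cast; ring
  have h₂ : Complex.exp (-(Complex.I * κ)) = Real.cos κ - Complex.I * Real.sin κ := by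
    rw [show -(Complex.I * κ) = (-κ : ℂ) * Complex.I by ring, Complex.exp_mul_I,
      Complex.cos_neg, Complex.sin_neg]
    push_cast; ring
  rw [Sh, h₁, h₂]

theorem Matrix.trace_mul_self_fin_two {R : Type*} [CommRing R] (A : Matrix (Fin 2) (Fin 2) R) :
    (A * A).trace = A.trace ^ 2 - 2 * A.det := by
  simp only [Matrix.trace_fin_two, Matrix.det_fin_two, Matrix.mul_apply, Fin.sum_univ_two]
  ring

theorem ofReal_cos_sq_add_sin_sq (x : ℝ) :
    (Real.cos x : ℂ) ^ 2 + (Real.sin x : ℂ) ^ 2 = 1 := by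
  exact_mod_cast Real.cos_sq_add_sin_sq x

theorem det_Ry (t : ℝ) : (Ry t).det = 1 := by
  rw [Ry, Matrix.det_fin_two_of]
  linear_combination ofReal_cos_sq_add_sin_sq (t / 2)

theorem det_Sh (κ : ℝ) : (Sh κ).det = 1 := by
  rw [Sh, Matrix.det_fin_two_of, ← Complex.exp_add]
  simp

theorem det_Calpha (α : ℝ) : (Calpha α).det = -1 := by
  rw [Calpha, Matrix.det_fin_two_of]
  linear_combination (Real.cos α : ℂ) ^ 2 * Complex.I_sq - ofReal_cos_sq_add_sin_sq α

theorem det_Cbeta (α : ℝ) : (Cbeta α).det = 1 := by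
  rw [Cbeta, Matrix.det_fin_two_of]
  linear_combination -(Real.sin α : ℂ) ^ 2 * Complex.I_sq + ofReal_cos_sq_add_sin_sq α

/-- The trace of `W_β · W_α` is purely imaginary. -/
theorem trace_Wbeta_mul_Walpha (k α θ : ℝ) :
    (Ry (-θ) * Sh k * Ry θ * Cbeta α * (Sh k * Calpha α)).trace =
      2 * Complex.I * ((Real.sin k * (Real.sin k * Real.sin θ * Real.cos (2 * α) -
        Real.cos k * Real.sin (2 * α)) : ℝ) : ℂ) := by
  have hθ : Real.sin θ = 2 * Real.sin (θ / 2) * Real.cos (θ / 2) := by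
    rw [← Real.sin_two_mul]; ring_nf
  have hp := ofReal_cos_sq_add_sin_sq (θ / 2)
  have hI := Complex.I_sq
  rw [hθ, Real.sin_two_mul, Real.cos_two_mul', Sh_eq_cos_sin, Ry, Ry, Cbeta, Calpha, neg_div,
    Real.cos_neg, Real.sin_neg]
  simp only [Matrix.trace_fin_two, Matrix.mul_apply, Fin.sum_univ_two, Matrix.of_apply,
    Matrix.cons_val', Matrix.cons_val_zero, Matrix.cons_val_one, Matrix.cons_val_fin_one,
    Complex.ofReal_mul, Complex.ofReal_sub, Complex.ofReal_pow, Complex.ofReal_neg,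
    Complex.ofReal_ofNat]
  generalize (Real.cos (θ / 2) : ℂ) = p at *
  generalize (Real.sin (θ / 2) : ℂ) = q at *
  generalize (Real.cos α : ℂ) = a at *
  generalize (Real.sin α : ℂ) = b at *
  generalize (Real.cos k : ℂ) = c at *
  generalize (Real.sin k : ℂ) = s at *
  generalize Complex.I = I at *
  grind

theorem one_sub_re_trace_UYY (k α θ : ℝ) :
    1 - (UYY k α θ).trace.re / 2 =
      2 * (Real.sin k * (Real.sin k * Real.sin θ * Real.cos (2 * α) -
        Real.cos k * Real.sin (2 * α))) ^ 2 := by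
  have h : (UYY k α θ).trace = ((2 - 4 * (Real.sin k * (Real.sin k * Real.sin θ *
      Real.cos (2 * α) - Real.cos k * Real.sin (2 * α))) ^ 2 : ℝ) : ℂ) := by
    rw [UYY, Matrix.trace_mul_self_fin_two, trace_Wbeta_mul_Walpha]
    simp only [Matrix.det_mul, det_Ry, det_Sh, det_Calpha, det_Cbeta, mul_pow, Complex.I_sq]
    push_cast
    ring
  rw [h, Complex.ofReal_re]
  ring

theorem tendsto_sin_mul_div (c : ℝ) :
    Tendsto (fun x : ℝ => Real.sin (c * x) / x) (𝓝[>] 0) (𝓝 c) := by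
  have h : HasDerivAt (fun x : ℝ => Real.sin (c * x)) c 0 := by
    simpa using ((hasDerivAt_id (0 : ℝ)).const_mul c).sin
  have h' := h.tendsto_slope_zero_right
  refine h'.congr fun x => ?_
  simp [div_eq_inv_mul]

open Filter Topology in
/-- Continuous-limit expansion of `d0` for the homogeneous Y–Y twisted walk:
`(1 − d0(ε))/ε² → 2k²(2α₁ − k sin θ)²` as `ε → 0⁺`. -/
theorem UYY_d0_continuous_limit (k α₁ θ : ℝ) :
    Tendsto
      (fun ε : ℝ =>
        (1 - (UYY (k * Real.sqrt ε) (α₁ * Real.sqrt ε) θ).trace.re / 2) / ε ^ 2)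
      (nhdsWithin 0 (Set.Ioi 0))
      (nhds (2 * k ^ 2 * (2 * α₁ - k * Real.sin θ) ^ 2)) := by
  have hsqrt : Tendsto Real.sqrt (𝓝[>] 0) (𝓝[>] 0) := by
    refine tendsto_nhdsWithin_iff.2 ⟨?_, ?_⟩
    · exact (Real.continuous_sqrt.tendsto' 0 0 Real.sqrt_zero).mono_left nhdsWithin_le_nhds
    · filter_upwards [self_mem_nhdsWithin] with x hx using Real.sqrt_pos.2 hx
  have hcos (c : ℝ) : Tendsto (fun x : ℝ => Real.cos (c * x)) (𝓝[>] 0) (𝓝 1) :=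
    ((by fun_prop : Continuous fun x : ℝ => Real.cos (c * x)).tendsto' 0 1
      (by simp)).mono_left nhdsWithin_le_nhds
  have hlim := ((((tendsto_sin_mul_div k).mul ((((tendsto_sin_mul_div k).mul_const
    (Real.sin θ)).mul (hcos (2 * α₁))).sub ((hcos k).mul
      (tendsto_sin_mul_div (2 * α₁))))).pow 2).const_mul 2).comp hsqrt
  rw [show 2 * k ^ 2 * (2 * α₁ - k * Real.sin θ) ^ 2 =
    2 * (k * (k * Real.sin θ * 1 - 1 * (2 * α₁))) ^ 2 by ring]
  refine hlim.congr' ?_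
  filter_upwards [self_mem_nhdsWithin] with ε hε
  have hpos : 0 < Real.sqrt ε := Real.sqrt_pos.2 hε
  have hsq : ε ^ 2 = Real.sqrt ε ^ 4 := by
    rw [show Real.sqrt ε ^ 4 = (Real.sqrt ε ^ 2) ^ 2 by ring, Real.sq_sqrt (le_of_lt hε)]
  rw [one_sub_re_trace_UYY, hsq, ← mul_assoc 2 α₁]
  simp only [Function.comp_apply]
  field_simp
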